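/- arXiv:1411.0328 — 5 statements merged into one kernel-verified Lean document; each statement's English description precedes it below -/
import Mathlib

section
/- Let γ > 1, d ≥ 1, let q : ℝ² → ℝ × ℝ^d × ℝ be an affine map, let S ⊆ ℝ² be a convex set on which the density (first) component of q(θ) is strictly positive, and let ε ∈ ℝ. Then the superlevel set S^p := {θ ∈ S : p(q(θ)) ≥ ε} is convex, where p is the pressure function. -/
/-- The pressure function of the compressible Euler equations, as a function of the
conserved variables `q = (ρ, m, E)` (density, momentum, energy):
`p(q) = (γ - 1) (E - ‖m‖² / (2ρ))`. -/
noncomputable def pressure (d : ℕ) (γ : ℝ)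
    (q : ℝ × EuclideanSpace ℝ (Fin d) × ℝ) : ℝ :=
  (γ - 1) * (q.2.2 - ‖q.2.1‖ ^ 2 / (2 * q.1))

/-! Titu's inequality `(a + b)² / (c + d) ≤ a² / c + b² / d` makes the square of a nonnegative
convex function divided by a positive concave one convex. The kinetic energy `‖m‖² / (2ρ)` is of
this form, so the pressure is concave where the density is positive. Concavity survives
precomposition with an affine map, and superlevel sets of concave functions are convex. -/

theorem add_sq_div_add_le_sq_div_add_sq_div {𝕜 : Type*} [Field 𝕜] [LinearOrder 𝕜]
    [IsStrictOrderedRing 𝕜] (a b : 𝕜) {c d : 𝕜} (hc : 0 < c) (hd : 0 < d) :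
    (a + b) ^ 2 / (c + d) ≤ a ^ 2 / c + b ^ 2 / d := by
  simpa using Finset.sq_sum_div_le_sum_sq_div Finset.univ ![a, b] (g := ![c, d])
    (by simp [Fin.forall_fin_two, hc, hd])

theorem convexOn_sq_div {𝕜 E : Type*} [Field 𝕜] [LinearOrder 𝕜] [IsStrictOrderedRing 𝕜]
    [AddCommMonoid E] [Module 𝕜 E] {s : Set E} {f g : E → 𝕜}
    (hf : ConvexOn 𝕜 s f) (hf₀ : ∀ x ∈ s, 0 ≤ f x)
    (hg : ConcaveOn 𝕜 s g) (hg₀ : ∀ x ∈ s, 0 < g x) :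
    ConvexOn 𝕜 s fun x ↦ f x ^ 2 / g x := by
  refine convexOn_iff_forall_pos.2 ⟨hf.1, fun x hx y hy a b ha hb hab ↦ ?_⟩
  have hz : a • x + b • y ∈ s := hf.1 hx hy ha.le hb.le hab
  have hgx : 0 < a * g x := mul_pos ha (hg₀ x hx)
  have hgy : 0 < b * g y := mul_pos hb (hg₀ y hy)
  calc f (a • x + b • y) ^ 2 / g (a • x + b • y)
      ≤ (a * f x + b * f y) ^ 2 / (a * g x + b * g y) := by
        gcongr
        · exact hf₀ _ hz
        · exact hf.2 hx hy ha.le hb.le hab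
        · exact hg.2 hx hy ha.le hb.le hab
    _ ≤ (a * f x) ^ 2 / (a * g x) + (b * f y) ^ 2 / (b * g y) :=
        add_sq_div_add_le_sq_div_add_sq_div _ _ hgx hgy
    _ = a • (f x ^ 2 / g x) + b • (f y ^ 2 / g y) := by
        simp only [smul_eq_mul]
        field_simp

theorem convexOn_norm_sq_div {F : Type*} [SeminormedAddCommGroup F] [NormedSpace ℝ F] :
    ConvexOn ℝ {p : ℝ × F | 0 < p.1} fun p ↦ ‖p.2‖ ^ 2 / p.1 := by
  have hs : Convex ℝ {p : ℝ × F | 0 < p.1} :=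
    convex_halfSpace_gt (LinearMap.fst ℝ ℝ F).isLinear 0
  have h_norm : ConvexOn ℝ {p : ℝ × F | 0 < p.1} fun p ↦ ‖p.2‖ :=
    (convexOn_univ_norm.comp_linearMap (LinearMap.snd ℝ ℝ F)).subset (Set.subset_univ _) hs
  exact convexOn_sq_div h_norm (fun _ _ ↦ norm_nonneg _)
    ((LinearMap.fst ℝ ℝ F).concaveOn hs) fun _ hp ↦ hp

theorem concaveOn_pressure (d : ℕ) {γ : ℝ} (hγ : 1 ≤ γ) :
    ConcaveOn ℝ {q : ℝ × EuclideanSpace ℝ (Fin d) × ℝ | 0 < q.1} (pressure d γ) := by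
  have h_kinetic : ConvexOn ℝ {q : ℝ × EuclideanSpace ℝ (Fin d) × ℝ | 0 < q.1}
      fun q ↦ ‖q.2.1‖ ^ 2 / (2 * q.1) := by
    simpa [Function.comp_def] using convexOn_norm_sq_div.comp_linearMap
      (((2 : ℝ) • LinearMap.fst ℝ ℝ (EuclideanSpace ℝ (Fin d) × ℝ)).prod
        (LinearMap.fst ℝ _ ℝ ∘ₗ LinearMap.snd ℝ ℝ _))
  have h_energy : ConcaveOn ℝ {q : ℝ × EuclideanSpace ℝ (Fin d) × ℝ | 0 < q.1} fun q ↦ q.2.2 :=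
    (LinearMap.snd ℝ _ ℝ ∘ₗ LinearMap.snd ℝ ℝ _).concaveOn h_kinetic.1
  exact (h_energy.sub h_kinetic).smul (sub_nonneg.2 hγ)

theorem pressure_superlevel_convex_general {E : Type*} [AddCommGroup E] [Module ℝ E] (d : ℕ)
    {γ : ℝ} (hγ : 1 ≤ γ) (q : E →ᵃ[ℝ] ℝ × EuclideanSpace ℝ (Fin d) × ℝ)
    {S : Set E} (hS : Convex ℝ S) (hpos : ∀ θ ∈ S, 0 < (q θ).1) (ε : ℝ) :
    Convex ℝ {θ ∈ S | pressure d γ (q θ) ≥ ε} :=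
  (((concaveOn_pressure d hγ).comp_affineMap q).subset hpos hS).convex_ge ε

/-- If `q` is an affine map of the limiting parameters `θ ∈ ℝ²` and `S ⊆ ℝ²` is a convex
set on which the density (first) component of `q(θ)` is strictly positive, then for any
`ε ∈ ℝ` the superlevel set `Sᵖ := {θ ∈ S : p(q(θ)) ≥ ε}` is convex. -/
theorem pressure_superlevel_convex (d : ℕ) (hd : 1 ≤ d) (γ : ℝ) (hγ : 1 < γ)
    (q : (ℝ × ℝ) →ᵃ[ℝ] ℝ × EuclideanSpace ℝ (Fin d) × ℝ)
    (S : Set (ℝ × ℝ)) (hS : Convex ℝ S)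
    (hpos : ∀ θ ∈ S, 0 < (q θ).1) (ε : ℝ) :
    Convex ℝ {θ ∈ S | pressure d γ (q θ) ≥ ε} :=
  pressure_superlevel_convex_general d hγ.le q hS hpos ε
end

section
/- (Density limiter, Case 4b.) Let Δf₋, Δf₊, ε, ρ̂ be real numbers with ε − ρ̂ ≤ 0, Δf₋ < 0, Δf₊ > 0, and suppose the inequality fails at (θ₋, θ₊) = (1,1), i.e. Δf₋ − Δf₊ < ε − ρ̂. Set Λ := (ε − ρ̂)/(Δf₋ − Δf₊). Then Λ ∈ [0,1), and for every (θ₋, θ₊) ∈ [0, Λ] × [0, Λ] one has θ₋ Δf₋ − θ₊ Δf₊ ≥ ε − ρ̂. -/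
/-! For `Δf₋ ≤ 0 ≤ Δf₊` the expression `θ₋ Δf₋ − θ₊ Δf₊` is antitone in each of `θ₋` and `θ₊`, so
on the square its minimum is attained at the corner `(Λ, Λ)`. The quotient `Λ` is chosen so that the
value at this corner, `Λ (Δf₋ − Δf₊)`, is exactly `ε − ρ̂`. -/

theorem mul_sub_le_mul_sub_mul {R : Type*} [Ring R] [PartialOrder R] [IsOrderedRing R]
    {a b s t r : R} (ha : a ≤ 0) (hb : 0 ≤ b) (hs : s ≤ r) (ht : t ≤ r) :
    r * (a - b) ≤ s * a - t * b :=
  calc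
    r * (a - b) = r * a - r * b := mul_sub r a b
    _ ≤ s * a - t * b :=
      sub_le_sub (mul_le_mul_of_nonpos_right hs ha) (mul_le_mul_of_nonneg_right ht hb)

section LinearOrderedField

variable {K : Type*} [Field K] [LinearOrder K] [IsStrictOrderedRing K]

theorem div_mem_Ico_zero_one_of_nonpos_of_lt {c d : K} (hc : c ≤ 0) (hdc : d < c) :
    c / d ∈ Set.Ico (0 : K) 1 :=
  have hd : d < 0 := hdc.trans_le hc
  ⟨div_nonneg_of_nonpos hc hd.le, (div_lt_one_of_neg hd).mpr hdc⟩

theorem density_limiter_case4b_general {Δfm Δfp ε ρhat : K} (hερ : ε - ρhat ≤ 0)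
    (hm : Δfm ≤ 0) (hp : 0 ≤ Δfp) (hfail : Δfm - Δfp < ε - ρhat) :
    (ε - ρhat) / (Δfm - Δfp) ∈ Set.Ico (0 : K) 1 ∧
    ∀ θm ≤ (ε - ρhat) / (Δfm - Δfp), ∀ θp ≤ (ε - ρhat) / (Δfm - Δfp),
      ε - ρhat ≤ θm * Δfm - θp * Δfp := by
  refine ⟨div_mem_Ico_zero_one_of_nonpos_of_lt hερ hfail, fun θm hθm θp hθp ↦ ?_⟩
  have hΔ : Δfm - Δfp ≠ 0 := (hfail.trans_le hερ).ne
  calc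
    ε - ρhat = (ε - ρhat) / (Δfm - Δfp) * (Δfm - Δfp) := (div_mul_cancel₀ _ hΔ).symm
    _ ≤ θm * Δfm - θp * Δfp := mul_sub_le_mul_sub_mul hm hp hθm hθp

end LinearOrderedField

/-- Density limiter, Case 4b: if `Δf₋ < 0`, `Δf₊ > 0` and the positivity inequality
fails at `(θ₋, θ₊) = (1,1)`, i.e. `Δf₋ − Δf₊ < ε − ρ̂`, then with
`Λ := (ε − ρ̂)/(Δf₋ − Δf₊)` one has `Λ ∈ [0,1)`, and the density positivity inequality
`θ₋ Δf₋ − θ₊ Δf₊ ≥ ε − ρ̂` holds for every `(θ₋, θ₊) ∈ [0,Λ] × [0,Λ]`. -/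
theorem density_limiter_case4b (Δfm Δfp ε ρhat : ℝ) (hερ : ε - ρhat ≤ 0)
    (h₁ : Δfm < 0) (h₂ : Δfp > 0) (hfail : Δfm - Δfp < ε - ρhat) :
    (ε - ρhat) / (Δfm - Δfp) ∈ Set.Ico (0 : ℝ) 1 ∧
    ∀ θm ∈ Set.Icc (0 : ℝ) ((ε - ρhat) / (Δfm - Δfp)),
      ∀ θp ∈ Set.Icc (0 : ℝ) ((ε - ρhat) / (Δfm - Δfp)),
        θm * Δfm - θp * Δfp ≥ ε - ρhat := by
  obtain ⟨hΛ, hpos⟩ := density_limiter_case4b_general hερ h₁.le h₂.le hfail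
  exact ⟨hΛ, fun θm hθm θp hθp ↦ hpos θm hθm.2 θp hθp.2⟩
end

section
/- (Unified multidimensional density-limiter bound.) Let n ≥ 1, let c : Fin n → ℝ, and let D ≤ 0 be real. Let S := Σ_{j : c_j < 0} c_j, and define Λ_j := 1 if c_j ≥ 0 and Λ_j := min(1, D/S) if c_j < 0. Then for every θ : Fin n → ℝ with 0 ≤ θ_j ≤ Λ_j for all j, one has Σ_j θ_j c_j ≥ D. -/
/-!
Replacing every `θ j` by `0` where `c j ≥ 0` and by a common upper bound `t` where `c j < 0` can
only decrease `∑ j, θ j * c j`, and leaves `t * S` with `S` the sum of the negative coefficients.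
For `t = D / S` this worst case equals `D`, unless there are no negative coefficients, when `S = 0`,
Lean's `D / S` is `0`, and the worst case is `0 ≥ D`.
-/

theorem mul_sum_filter_neg_le_sum_mul {ι R : Type*} [Ring R] [LinearOrder R] [IsOrderedRing R]
    {s : Finset ι} {c θ : ι → R} {t : R} (hθ_nonneg : ∀ j ∈ s, 0 ≤ c j → 0 ≤ θ j)
    (hθ_le : ∀ j ∈ s, c j < 0 → θ j ≤ t) :
    t * ∑ j ∈ s with c j < 0, c j ≤ ∑ j ∈ s, θ j * c j := by
  have neg_part : ∑ j ∈ s with c j < 0, t * c j ≤ ∑ j ∈ s with c j < 0, θ j * c j := by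
    refine Finset.sum_le_sum fun j hj ↦ ?_
    obtain ⟨hjs, hcj⟩ := Finset.mem_filter.mp hj
    exact mul_le_mul_of_nonpos_right (hθ_le j hjs hcj) hcj.le
  have nonneg_part : 0 ≤ ∑ j ∈ s with ¬c j < 0, θ j * c j := by
    refine Finset.sum_nonneg fun j hj ↦ ?_
    obtain ⟨hjs, hcj⟩ := Finset.mem_filter.mp hj
    exact mul_nonneg (hθ_nonneg j hjs (not_lt.mp hcj)) (not_lt.mp hcj)
  calc t * ∑ j ∈ s with c j < 0, c j
      = ∑ j ∈ s with c j < 0, t * c j := Finset.mul_sum ..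
    _ ≤ ∑ j ∈ s with c j < 0, θ j * c j := neg_part
    _ ≤ ∑ j ∈ s with c j < 0, θ j * c j + ∑ j ∈ s with ¬c j < 0, θ j * c j :=
        le_add_of_nonneg_right nonneg_part
    _ = ∑ j ∈ s, θ j * c j := Finset.sum_filter_add_sum_filter_not ..

theorem le_div_mul_self_of_nonpos {G₀ : Type*} [GroupWithZero G₀] [Preorder G₀] {a : G₀}
    (ha : a ≤ 0) (b : G₀) : a ≤ a / b * b := by
  obtain rfl | hb := eq_or_ne b 0
  · rwa [mul_zero]
  · rw [div_mul_cancel₀ a hb]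

theorem density_limiter_multiD_general {ι K : Type*} [DivisionRing K] [LinearOrder K]
    [IsStrictOrderedRing K] {s : Finset ι} {c θ : ι → K} {D : K} (hD : D ≤ 0)
    (hθ_nonneg : ∀ j ∈ s, 0 ≤ c j → 0 ≤ θ j)
    (hθ_le : ∀ j ∈ s, c j < 0 → θ j ≤ D / ∑ i ∈ s with c i < 0, c i) :
    D ≤ ∑ j ∈ s, θ j * c j :=
  (le_div_mul_self_of_nonpos hD _).trans (mul_sum_filter_neg_le_sum_mul hθ_nonneg hθ_le)

open Finset in
/-- Unified multidimensional density-limiter bound: with `S` the sum of the negative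
coefficients `c j`, and `Λ j := 1` for `c j ≥ 0`, `Λ j := min(1, D/S)` for `c j < 0`,
every `θ` with `0 ≤ θ j ≤ Λ j` satisfies `∑ j, θ j * c j ≥ D` whenever `D ≤ 0`. -/
theorem density_limiter_multiD (n : ℕ) (hn : 1 ≤ n) (c : Fin n → ℝ) (D : ℝ) (hD : D ≤ 0)
    (S : ℝ) (hS : S = ∑ j ∈ Finset.univ.filter (fun j => c j < 0), c j)
    (Λ : Fin n → ℝ) (hΛ : ∀ j, Λ j = if c j < 0 then min 1 (D / S) else 1) :
    ∀ θ : Fin n → ℝ, (∀ j, 0 ≤ θ j) → (∀ j, θ j ≤ Λ j) →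
      ∑ j, θ j * c j ≥ D :=
  fun θ hθ_nonneg hθ_le ↦ density_limiter_multiD_general hD (fun j _ _ ↦ hθ_nonneg j)
    fun j _ hcj ↦ (hθ_le j).trans (by simp only [hΛ, if_pos hcj, hS, min_le_right])
end

section
/- (Step-2 rectangle lemma, 1D.) Let Λ₁, Λ₂ ≥ 0, let ε ∈ ℝ, and let P : ℝ² → ℝ be concave on the rectangle [0, Λ₁] × [0, Λ₂]. Suppose there exist r₁₀, r₀₁, r₁₁ ∈ [0,1] such that P(0,0) ≥ ε, P(r₁₀Λ₁, 0) ≥ ε, P(0, r₀₁Λ₂) ≥ ε, and P(r₁₁Λ₁, r₁₁Λ₂) ≥ ε. Then P(θ₁, θ₂) ≥ ε for every (θ₁, θ₂) with 0 ≤ θ₁ ≤ min(r₁₀, r₁₁)·Λ₁ and 0 ≤ θ₂ ≤ min(r₀₁, r₁₁)·Λ₂. -/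
/-!
The superlevel set `{P ≥ ε}` is convex. Write a point of the sub-rectangle as `s • v + t • w`, where
`v` and `w` are the sides of the large rectangle. If `s ≤ t`, it lies on the segment from `t • w` to
`t • (v + w)`, and these endpoints lie on the segments joining the origin to the rescaled vertices
on the rays of `w` and `v + w`. The case `t ≤ s` is symmetric.
-/

section Convex

variable {𝕜 E : Type*} [Field 𝕜] [LinearOrder 𝕜] [IsStrictOrderedRing 𝕜]
  [AddCommGroup E] [Module 𝕜 E] {C : Set E} {v w x : E} {a b c s t : 𝕜}

theorem smul_add_mem_of_convex_of_mem_Icc (hC : Convex 𝕜 C) (ha : a • v + x ∈ C)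
    (hb : b • v + x ∈ C) (hs : s ∈ Set.Icc a b) : s • v + x ∈ C := by
  have hline : Convex 𝕜 {r : 𝕜 | r • v + x ∈ C} :=
    (hC.translate_preimage_left x).linear_preimage (LinearMap.toSpanSingleton 𝕜 E v)
  exact hline.ordConnected.out ha hb hs

theorem smul_mem_of_convex_of_mem_Icc (hC : Convex 𝕜 C) (ha : a • v ∈ C) (hb : b • v ∈ C)
    (hs : s ∈ Set.Icc a b) : s • v ∈ C := by
  rw [← add_zero (_ • v)] at ha hb ⊢
  exact smul_add_mem_of_convex_of_mem_Icc hC ha hb hs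

theorem smul_add_smul_mem_of_convex_of_le (hC : Convex 𝕜 C) (h0 : 0 ∈ C) (hw : b • w ∈ C)
    (hvw : c • (v + w) ∈ C) (hs : 0 ≤ s) (hst : s ≤ t) (ht : t ≤ min b c) :
    s • v + t • w ∈ C := by
  have h0_smul (y : E) : (0 : 𝕜) • y ∈ C := by rwa [zero_smul]
  have ht0 : 0 ≤ t := hs.trans hst
  have hleft : t • w ∈ C :=
    smul_mem_of_convex_of_mem_Icc hC (h0_smul w) hw ⟨ht0, ht.trans (min_le_left b c)⟩
  have hright : t • (v + w) ∈ C :=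
    smul_mem_of_convex_of_mem_Icc hC (h0_smul _) hvw ⟨ht0, ht.trans (min_le_right b c)⟩
  rw [smul_add] at hright
  exact smul_add_mem_of_convex_of_mem_Icc hC (by rwa [zero_smul, zero_add]) hright ⟨hs, hst⟩

theorem smul_add_smul_mem_of_convex (hC : Convex 𝕜 C) (h0 : 0 ∈ C) (hv : a • v ∈ C)
    (hw : b • w ∈ C) (hvw : c • (v + w) ∈ C) (hs : s ∈ Set.Icc 0 (min a c))
    (ht : t ∈ Set.Icc 0 (min b c)) : s • v + t • w ∈ C := by
  rcases le_total s t with hst | hts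
  · exact smul_add_smul_mem_of_convex_of_le hC h0 hw hvw hs.1 hst ht.2
  · rw [add_comm] at hvw ⊢
    exact smul_add_smul_mem_of_convex_of_le hC h0 hv hvw ht.1 hts hs.2

end Convex

theorem exists_mem_Icc_mul_eq {𝕜 : Type*} [Field 𝕜] [LinearOrder 𝕜] [IsStrictOrderedRing 𝕜]
    {m x y : 𝕜} (hm : 0 ≤ m) (hx : 0 ≤ x) (hy : y ∈ Set.Icc 0 (m * x)) :
    ∃ s ∈ Set.Icc 0 m, s * x = y := by
  rwa [← zero_mul x, ← Set.image_mul_right_Icc hm hx] at hy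

theorem step2_rectangle_1d_general {𝕜 β : Type*} [Field 𝕜] [LinearOrder 𝕜]
    [IsStrictOrderedRing 𝕜] [LE β] {Λ₁ Λ₂ : 𝕜} (hΛ₁ : 0 ≤ Λ₁) (hΛ₂ : 0 ≤ Λ₂) {ε : β}
    {P : 𝕜 × 𝕜 → β} (hP : QuasiconcaveOn 𝕜 (Set.Icc 0 Λ₁ ×ˢ Set.Icc 0 Λ₂) P)
    {r₁₀ r₀₁ r₁₁ : 𝕜} (hr₁₀ : r₁₀ ∈ Set.Icc 0 1) (hr₀₁ : r₀₁ ∈ Set.Icc 0 1)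
    (hr₁₁ : r₁₁ ∈ Set.Icc 0 1) (h00 : ε ≤ P (0, 0)) (h10 : ε ≤ P (r₁₀ * Λ₁, 0))
    (h01 : ε ≤ P (0, r₀₁ * Λ₂)) (h11 : ε ≤ P (r₁₁ * Λ₁, r₁₁ * Λ₂)) {θ₁ θ₂ : 𝕜}
    (hθ₁ : θ₁ ∈ Set.Icc 0 (min r₁₀ r₁₁ * Λ₁)) (hθ₂ : θ₂ ∈ Set.Icc 0 (min r₀₁ r₁₁ * Λ₂)) :
    ε ≤ P (θ₁, θ₂) := by
  have mul_mem_Icc {r Λ : 𝕜} (hΛ : 0 ≤ Λ) (hr : r ∈ Set.Icc 0 1) : r * Λ ∈ Set.Icc 0 Λ :=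
    ⟨mul_nonneg hr.1 hΛ, mul_le_of_le_one_left hΛ hr.2⟩
  obtain ⟨s, hs, rfl⟩ := exists_mem_Icc_mul_eq (le_min hr₁₀.1 hr₁₁.1) hΛ₁ hθ₁
  obtain ⟨t, ht, rfl⟩ := exists_mem_Icc_mul_eq (le_min hr₀₁.1 hr₁₁.1) hΛ₂ hθ₂
  let C : Set (𝕜 × 𝕜) := {x ∈ Set.Icc 0 Λ₁ ×ˢ Set.Icc 0 Λ₂ | ε ≤ P x}
  have h0₁ : (0 : 𝕜) ∈ Set.Icc 0 Λ₁ := Set.left_mem_Icc.2 hΛ₁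
  have h0₂ : (0 : 𝕜) ∈ Set.Icc 0 Λ₂ := Set.left_mem_Icc.2 hΛ₂
  have hv : r₁₀ • (Λ₁, (0 : 𝕜)) ∈ C := by
    rw [Prod.smul_mk, smul_zero]
    exact ⟨⟨mul_mem_Icc hΛ₁ hr₁₀, h0₂⟩, h10⟩
  have hw : r₀₁ • ((0 : 𝕜), Λ₂) ∈ C := by
    rw [Prod.smul_mk, smul_zero]
    exact ⟨⟨h0₁, mul_mem_Icc hΛ₂ hr₀₁⟩, h01⟩
  have hvw : r₁₁ • ((Λ₁, (0 : 𝕜)) + ((0 : 𝕜), Λ₂)) ∈ C := by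
    rw [Prod.mk_add_mk, add_zero, zero_add]
    exact ⟨⟨mul_mem_Icc hΛ₁ hr₁₁, mul_mem_Icc hΛ₂ hr₁₁⟩, h11⟩
  have hmem := smul_add_smul_mem_of_convex (hP ε) ⟨⟨h0₁, h0₂⟩, h00⟩ hv hw hvw hs ht
  simpa using hmem.2

/-- Step-2 rectangle lemma (1D): if `P` is concave on the rectangle `[0,Λ₁] × [0,Λ₂]`
and the pressure bound `P ≥ ε` holds at the origin and at the rescaled vertices
`(r₁₀Λ₁, 0)`, `(0, r₀₁Λ₂)` and `(r₁₁Λ₁, r₁₁Λ₂)`, then `P ≥ ε` on the sub-rectangle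
`[0, min(r₁₀,r₁₁)Λ₁] × [0, min(r₀₁,r₁₁)Λ₂]`. -/
theorem step2_rectangle_1d (Λ₁ Λ₂ : ℝ) (hΛ₁ : 0 ≤ Λ₁) (hΛ₂ : 0 ≤ Λ₂) (ε : ℝ)
    (P : ℝ × ℝ → ℝ) (hP : ConcaveOn ℝ (Set.Icc (0 : ℝ) Λ₁ ×ˢ Set.Icc (0 : ℝ) Λ₂) P)
    (r₁₀ r₀₁ r₁₁ : ℝ)
    (hr₁₀ : r₁₀ ∈ Set.Icc (0 : ℝ) 1) (hr₀₁ : r₀₁ ∈ Set.Icc (0 : ℝ) 1)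
    (hr₁₁ : r₁₁ ∈ Set.Icc (0 : ℝ) 1)
    (h00 : P (0, 0) ≥ ε) (h10 : P (r₁₀ * Λ₁, 0) ≥ ε) (h01 : P (0, r₀₁ * Λ₂) ≥ ε)
    (h11 : P (r₁₁ * Λ₁, r₁₁ * Λ₂) ≥ ε) :
    ∀ θ₁ θ₂ : ℝ, 0 ≤ θ₁ → θ₁ ≤ min r₁₀ r₁₁ * Λ₁ → 0 ≤ θ₂ → θ₂ ≤ min r₀₁ r₁₁ * Λ₂ →
      P (θ₁, θ₂) ≥ ε := by
  intro θ₁ θ₂ hθ₁ hθ₁' hθ₂ hθ₂'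
  exact step2_rectangle_1d_general hΛ₁ hΛ₂ hP.quasiconcaveOn
    hr₁₀ hr₀₁ hr₁₁ h00 h10 h01 h11 ⟨hθ₁, hθ₁'⟩ ⟨hθ₂, hθ₂'⟩
end

section
/- (Step-2 hypercube lemma, 2D.) Let Λ : Fin 4 → ℝ with Λ_j ≥ 0 for all j, let ε ∈ ℝ, and let P : (Fin 4 → ℝ) → ℝ be concave on the box B := Π_j [0, Λ_j]. Suppose for every vertex v ∈ {0,1}⁴ there is r_v ∈ [0,1] such that P(r_v · (v₁Λ₁, v₂Λ₂, v₃Λ₃, v₄Λ₄)) ≥ ε. Then P(θ) ≥ ε for every θ with 0 ≤ θ_j ≤ m_j Λ_j for all j, where m_j := min over the vertices v with v_j = 1 of r_v. -/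
/-!
A convex set that meets every closed orthant with apex `θ` contains `θ`: two points of the set
whose `a`-th coordinates lie on either side of `θ a`, and whose other coordinates lie pairwise on
the same side of those of `θ`, are joined by a segment crossing the hyperplane `y a = θ a`, so the
coordinates can be matched with those of `θ` one at a time. Apply this to a superlevel set
`{ε ≤ P}`: the rescaled vertex attached to `v` is at least `θ` in the coordinates with `v j = 1`
by the choice of the minima, and vanishes, hence is at most `θ`, in the others.
-/

section Orthant

variable {ι 𝕜 : Type*}

/-- The closed orthant with apex `θ` whose sign pattern is `+` on `s` and `-` off `s`. It provides
the test sets by which a point is recognised as lying in a convex set. -/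
def closedOrthant [LE 𝕜] (θ : ι → 𝕜) (s : Set ι) : Set (ι → 𝕜) :=
  {y | (∀ j ∈ s, θ j ≤ y j) ∧ ∀ j ∉ s, y j ≤ θ j}

variable [Field 𝕜] [LinearOrder 𝕜] [IsStrictOrderedRing 𝕜] {θ : ι → 𝕜}

theorem exists_mem_segment_closedOrthant_apply_eq {s : Set ι} {a : ι} {y z : ι → 𝕜}
    (hy : y ∈ closedOrthant θ (insert a s)) (hz : z ∈ closedOrthant θ (s \ {a})) :
    ∃ w ∈ segment 𝕜 z y, w ∈ closedOrthant θ s ∧ w a = θ a := by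
  have hza : z a ≤ θ a := hz.2 a fun h => h.2 rfl
  have hya : θ a ≤ y a := hy.1 a (Set.mem_insert a s)
  obtain ⟨c, d, hc, hd, hcd, hwa⟩ : θ a ∈ segment 𝕜 (z a) (y a) := by
    rw [segment_eq_Icc (hza.trans hya)]
    exact ⟨hza, hya⟩
  refine ⟨c • z + d • y, ⟨c, d, hc, hd, hcd, rfl⟩, ⟨fun j hj => ?_, fun j hj => ?_⟩, hwa⟩ <;>
    obtain rfl | hja := eq_or_ne j a
  · exact hwa.ge
  · exact convex_Ici (𝕜 := 𝕜) (θ j) (hz.1 j ⟨hj, hja⟩) (hy.1 j (.inr hj)) hc hd hcd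
  · exact hwa.le
  · exact convex_Iic (𝕜 := 𝕜) (θ j) (hz.2 j fun h => hj h.1) (hy.2 j (by simp [hja, hj]))
      hc hd hcd

theorem exists_mem_eqOn_of_forall_closedOrthant (t : Finset ι) {C : Set (ι → 𝕜)} (hC : Convex 𝕜 C)
    (hmeet : ∀ s, (C ∩ closedOrthant θ s).Nonempty) : ∃ y ∈ C, Set.EqOn y θ t := by
  classical
  induction t using Finset.induction_on generalizing C with
  | empty =>
    obtain ⟨y, hyC, -⟩ := hmeet ∅
    exact ⟨y, hyC, by simp⟩
  | insert a t _ ih =>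
    have hslice : Convex 𝕜 (C ∩ {y | y a = θ a}) :=
      hC.inter ((convex_singleton (θ a)).linear_preimage (LinearMap.proj a : (ι → 𝕜) →ₗ[𝕜] 𝕜))
    obtain ⟨y, ⟨hyC, hya⟩, hyt⟩ := ih hslice fun s => by
      obtain ⟨y, hyC, hy⟩ := hmeet (insert a s)
      obtain ⟨z, hzC, hz⟩ := hmeet (s \ {a})
      obtain ⟨w, hwseg, hws, hwa⟩ := exists_mem_segment_closedOrthant_apply_eq hy hz
      exact ⟨w, ⟨hC.segment_subset hzC hyC hwseg, hwa⟩, hws⟩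
    refine ⟨y, hyC, ?_⟩
    rw [Finset.coe_insert, Set.insert_eq, Set.eqOn_union, Set.eqOn_singleton]
    exact ⟨hya, hyt⟩

theorem mem_of_convex_of_forall_closedOrthant [Finite ι] {C : Set (ι → 𝕜)}
    (hC : Convex 𝕜 C) (hmeet : ∀ s, (C ∩ closedOrthant θ s).Nonempty) : θ ∈ C := by
  cases nonempty_fintype ι
  obtain ⟨y, hyC, hyθ⟩ := exists_mem_eqOn_of_forall_closedOrthant Finset.univ hC hmeet
  rw [Finset.coe_univ, Set.eqOn_univ] at hyθ
  exact hyθ ▸ hyC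

end Orthant

section ScaledVertex

variable {ι R : Type*} [Semiring R]

/-- The point `B = c A` on the ray from the origin through the vertex `A = (v j * Λ j)` of the box
`Π_j [0, Λ j]`; `v j` tells whether the `j`-th coordinate of `A` is `Λ j` or `0`. -/
def scaledVertex (Λ : ι → R) (c : R) (v : ι → Bool) : ι → R :=
  fun j => c * (if v j then Λ j else 0)

variable [PartialOrder R] {Λ : ι → R} {c : R}

theorem scaledVertex_mem_Icc [IsOrderedRing R] (hΛ : 0 ≤ Λ) (hc : c ∈ Set.Icc 0 1)
    (v : ι → Bool) : scaledVertex Λ c v ∈ Set.Icc 0 Λ := by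
  have hcoord (j : ι) : 0 ≤ scaledVertex Λ c v j ∧ scaledVertex Λ c v j ≤ Λ j := by
    cases hv : v j
    · simpa [scaledVertex, hv] using hΛ j
    · simpa [scaledVertex, hv] using
        And.intro (mul_nonneg hc.1 (hΛ j)) (mul_le_of_le_one_left (hΛ j) hc.2)
  exact ⟨fun j => (hcoord j).1, fun j => (hcoord j).2⟩

theorem scaledVertex_mem_closedOrthant {θ : ι → R} {v : ι → Bool} (hθ : 0 ≤ θ)
    (hle : ∀ j, v j → θ j ≤ c * Λ j) : scaledVertex Λ c v ∈ closedOrthant θ {j | v j} := by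
  refine ⟨fun j (hj : v j) => ?_, fun j (hj : ¬v j) => ?_⟩
  · simpa [scaledVertex, hj] using hle j hj
  · simpa [scaledVertex, hj] using hθ j

end ScaledVertex

theorem step2_hypercube_2d_general {ι 𝕜 β : Type*} [Finite ι] [Field 𝕜] [LinearOrder 𝕜]
    [IsStrictOrderedRing 𝕜] [LE β] {Λ : ι → 𝕜} (hΛ : 0 ≤ Λ) {ε : β} {P : (ι → 𝕜) → β}
    (hP : QuasiconcaveOn 𝕜 (Set.Icc 0 Λ) P)
    {r : (ι → Bool) → 𝕜} (hr : ∀ v, r v ∈ Set.Icc 0 1)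
    (hvert : ∀ v, ε ≤ P (scaledVertex Λ (r v) v)) {θ : ι → 𝕜} (hθ : 0 ≤ θ)
    (hle : ∀ j v, v j → θ j ≤ r v * Λ j) : ε ≤ P θ := by
  classical
  suffices θ ∈ {x ∈ Set.Icc 0 Λ | ε ≤ P x} from this.2
  refine mem_of_convex_of_forall_closedOrthant (hP ε) fun s => ?_
  let v : ι → Bool := fun j => decide (j ∈ s)
  have hv : {j | v j} = s := by simp [v]
  have horthant : scaledVertex Λ (r v) v ∈ closedOrthant θ {j | v j} :=
    scaledVertex_mem_closedOrthant hθ fun j => hle j v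
  exact ⟨_, ⟨scaledVertex_mem_Icc hΛ (hr v) v, hvert v⟩, hv ▸ horthant⟩

/-- Step-2 hypercube lemma (2D): let `P` be concave on the box `Π_j [0, Λ j]`, and
suppose for every vertex `v ∈ {0,1}⁴` there is a rescaling factor `r v ∈ [0,1]` with
`P(r v • (v₁Λ₁, v₂Λ₂, v₃Λ₃, v₄Λ₄)) ≥ ε`.  Then `P θ ≥ ε` for every `θ` with
`0 ≤ θ j ≤ m j * Λ j` for all `j`, where `m j` is the minimum of `r v` over the
vertices `v` with `v j = 1` (expressed below by requiring `θ j ≤ r v * Λ j` for all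
such vertices, which is equivalent since `Λ j ≥ 0`). -/
theorem step2_hypercube_2d (Λ : Fin 4 → ℝ) (hΛ : ∀ j, 0 ≤ Λ j) (ε : ℝ)
    (P : (Fin 4 → ℝ) → ℝ)
    (hP : ConcaveOn ℝ (Set.univ.pi fun j => Set.Icc (0 : ℝ) (Λ j)) P)
    (r : (Fin 4 → Bool) → ℝ) (hr : ∀ v, r v ∈ Set.Icc (0 : ℝ) 1)
    (hvert : ∀ v : Fin 4 → Bool, P (fun j => r v * (if v j then Λ j else 0)) ≥ ε) :
    ∀ θ : Fin 4 → ℝ, (∀ j, 0 ≤ θ j) →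
      (∀ j, ∀ v : Fin 4 → Bool, v j = true → θ j ≤ r v * Λ j) →
      P θ ≥ ε := by
  rw [Set.pi_univ_Icc] at hP
  exact fun _ hθ hle => step2_hypercube_2d_general hΛ hP.quasiconcaveOn hr hvert hθ hle
end
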